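/- arXiv:2209.12449 — 6 statements merged into one kernel-verified Lean document; each statement's English description precedes it below -/
import Mathlib

section
/- Let λ : ℝ → ℝ be twice continuously differentiable, and let ρ, u : ℝ × ℝ → ℝ (functions of time t and space x) be smooth with ρ(t,x) > 0 and λ(ρ(t,x)) > 0 for all (t,x). Suppose that pointwise ∂_t ρ + ∂_x(ρ u) = 0 and ∂_t(ρ u) + ∂_x(ρ u²) − ∂_x(λ(ρ) ∂_x u) = 0. Then the active potential V := λ(ρ) ∂_x u satisfies pointwise ∂_t V + (u + (λ(ρ)/ρ²) ∂_x ρ) ∂_x V − (λ(ρ)/ρ) ∂_x² V = −((λ'(ρ) ρ + λ(ρ))/λ(ρ)²) V². -/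
/-!
The momentum equation minus `u` times the continuity equation gives the pointwise identity
`∂ₓ V = ρ (∂ₜ u + u ∂ₓ u)`. Differentiating it in `x` expresses `∂ₓ² V` through `∂ₓ ∂ₜ u`, while the
chain rule expresses `∂ₜ V` through `∂ₜ ∂ₓ u`. Equality of the mixed derivatives
(`deriv_deriv_comm`) and the continuity equation for `∂ₜ ρ` then reduce the claim to an algebraic
identity. The momentum identity also shows that `∂ₓ V` is differentiable.
-/

section PartialDerivatives

variable {f : ℝ → ℝ → ℝ}

lemma hasDerivAt_fst {F : ℝ × ℝ → ℝ} {F' : ℝ × ℝ →L[ℝ] ℝ} {t x : ℝ}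
    (hF : HasFDerivAt F F' (t, x)) : HasDerivAt (fun s => F (s, x)) (F' (1, 0)) t :=
  hF.comp_hasDerivAt t ((hasDerivAt_id t).prodMk (hasDerivAt_const t x))

lemma hasDerivAt_snd {F : ℝ × ℝ → ℝ} {F' : ℝ × ℝ →L[ℝ] ℝ} {t x : ℝ}
    (hF : HasFDerivAt F F' (t, x)) : HasDerivAt (fun y => F (t, y)) (F' (0, 1)) x :=
  hF.comp_hasDerivAt x ((hasDerivAt_const x t).prodMk (hasDerivAt_id x))

lemma deriv_fst_eq (hf : ContDiff ℝ (⊤ : ℕ∞) (fun q : ℝ × ℝ => f q.1 q.2)) (t x : ℝ) :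
    deriv (fun s => f s x) t = fderiv ℝ (fun q : ℝ × ℝ => f q.1 q.2) (t, x) (1, 0) :=
  (hasDerivAt_fst (hf.differentiable (by simp) (t, x)).hasFDerivAt).deriv

lemma deriv_snd_eq (hf : ContDiff ℝ (⊤ : ℕ∞) (fun q : ℝ × ℝ => f q.1 q.2)) (t x : ℝ) :
    deriv (f t) x = fderiv ℝ (fun q : ℝ × ℝ => f q.1 q.2) (t, x) (0, 1) :=
  (hasDerivAt_snd (hf.differentiable (by simp) (t, x)).hasFDerivAt).deriv

lemma contDiff_deriv_fst (hf : ContDiff ℝ (⊤ : ℕ∞) (fun q : ℝ × ℝ => f q.1 q.2)) :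
    ContDiff ℝ (⊤ : ℕ∞) (fun q : ℝ × ℝ => deriv (fun s => f s q.2) q.1) := by
  simp only [deriv_fst_eq hf]
  exact (hf.fderiv_right (by simp)).clm_apply contDiff_const

lemma contDiff_deriv_snd (hf : ContDiff ℝ (⊤ : ℕ∞) (fun q : ℝ × ℝ => f q.1 q.2)) :
    ContDiff ℝ (⊤ : ℕ∞) (fun q : ℝ × ℝ => deriv (f q.1) q.2) := by
  simp only [deriv_snd_eq hf]
  exact (hf.fderiv_right (by simp)).clm_apply contDiff_const

lemma hasDerivAt_deriv_fst (hf : ContDiff ℝ (⊤ : ℕ∞) (fun q : ℝ × ℝ => f q.1 q.2)) (t x : ℝ) :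
    HasDerivAt (fun s => f s x) (deriv (fun s => f s x) t) t :=
  (hasDerivAt_fst (hf.differentiable (by simp) (t, x)).hasFDerivAt).differentiableAt.hasDerivAt

lemma hasDerivAt_deriv_snd (hf : ContDiff ℝ (⊤ : ℕ∞) (fun q : ℝ × ℝ => f q.1 q.2)) (t x : ℝ) :
    HasDerivAt (f t) (deriv (f t) x) x :=
  (hasDerivAt_snd (hf.differentiable (by simp) (t, x)).hasFDerivAt).differentiableAt.hasDerivAt

/-- Equality of mixed partial derivatives, `∂ₜ ∂ₓ f = ∂ₓ ∂ₜ f`. -/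
lemma deriv_deriv_comm (hf : ContDiff ℝ (⊤ : ℕ∞) (fun q : ℝ × ℝ => f q.1 q.2)) (t x : ℝ) :
    deriv (fun s => deriv (f s) x) t = deriv (fun y => deriv (fun s => f s y) t) x := by
  have hD := ((hf.fderiv_right (m := (⊤ : ℕ∞)) (by simp)).differentiable
    (by simp) (t, x)).hasFDerivAt
  simp only [deriv_fst_eq hf, deriv_snd_eq hf]
  rw [(hasDerivAt_fst (hD.clm_apply (hasFDerivAt_const ((0, 1) : ℝ × ℝ) (t, x)))).deriv,
    (hasDerivAt_snd (hD.clm_apply (hasFDerivAt_const ((1, 0) : ℝ × ℝ) (t, x)))).deriv]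
  have hs : IsSymmSndFDerivAt ℝ (fun q : ℝ × ℝ => f q.1 q.2) (t, x) :=
    hf.contDiffAt.isSymmSndFDerivAt (by
      simpa using WithTop.coe_le_coe.2 (le_top : (2 : ℕ∞) ≤ ⊤))
  simpa using hs.eq (1, 0) (0, 1)

end PartialDerivatives


/-- Equation for the active potential `V = λ(ρ) ∂ₓ u` for smooth solutions of the
pressureless compressible Navier–Stokes system with density-dependent viscosity. -/
theorem stmt0
    (lam : ℝ → ℝ) (hlam : ContDiff ℝ 2 lam)
    (ρ u : ℝ → ℝ → ℝ)
    (hρ : ContDiff ℝ (⊤ : ℕ∞) (fun q : ℝ × ℝ => ρ q.1 q.2))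
    (hu : ContDiff ℝ (⊤ : ℕ∞) (fun q : ℝ × ℝ => u q.1 q.2))
    (hρpos : ∀ t x, 0 < ρ t x)
    (hlampos : ∀ t x, 0 < lam (ρ t x))
    (hcont : ∀ t x,
      deriv (fun s => ρ s x) t + deriv (fun y => ρ t y * u t y) x = 0)
    (hmom : ∀ t x,
      deriv (fun s => ρ s x * u s x) t
        + deriv (fun y => ρ t y * (u t y) ^ 2) x
        - deriv (fun y => lam (ρ t y) * deriv (u t) y) x = 0) :
    ∀ t x,
      deriv (fun s => lam (ρ s x) * deriv (u s) x) t
        + (u t x + lam (ρ t x) / (ρ t x) ^ 2 * deriv (ρ t) x)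
            * deriv (fun y => lam (ρ t y) * deriv (u t) y) x
        - lam (ρ t x) / ρ t x
            * deriv (deriv (fun y => lam (ρ t y) * deriv (u t) y)) x
      = -((deriv lam (ρ t x) * ρ t x + lam (ρ t x)) / (lam (ρ t x)) ^ 2)
          * (lam (ρ t x) * deriv (u t) x) ^ 2 := by
  intro t x
  have ρt := hasDerivAt_deriv_fst hρ
  have ρx := hasDerivAt_deriv_snd hρ
  have ut := hasDerivAt_deriv_fst hu
  have ux := hasDerivAt_deriv_snd hu
  have uxt := hasDerivAt_deriv_fst (f := fun t x => deriv (u t) x) (contDiff_deriv_snd hu) t x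
  have uxx := hasDerivAt_deriv_snd (f := fun t x => deriv (u t) x) (contDiff_deriv_snd hu) t x
  have utx := hasDerivAt_deriv_snd (f := fun t x => deriv (fun s => u s x) t)
    (contDiff_deriv_fst hu) t x
  have hl : ∀ r, HasDerivAt lam (deriv lam r) r := fun r =>
    (hlam.differentiable (by simp) r).hasDerivAt
  have hc : ∀ y, deriv (fun s => ρ s y) t = -(deriv (ρ t) y * u t y + ρ t y * deriv (u t) y) := by
    intro y
    have h := hcont t y
    rw [((ρx t y).fun_mul (ux t y)).deriv] at h
    linarith
  have hVx : deriv (fun y => lam (ρ t y) * deriv (u t) y)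
      = fun y => ρ t y * (deriv (fun s => u s y) t + u t y * deriv (u t) y) := by
    funext y
    have h := hmom t y
    rw [((ρt t y).fun_mul (ut t y)).deriv, ((ρx t y).fun_mul ((ux t y).fun_pow 2)).deriv, hc y] at h
    push_cast at h
    linear_combination -h
  have hVxx := ((ρx t x).fun_mul (utx.fun_add ((ux t x).fun_mul uxx))).deriv
  have hVt := (((hl (ρ t x)).comp t (ρt t x)).fun_mul uxt).deriv
  -- The chain rule gives a second expression for `∂ₓ V`, the one containing `∂ₓ² u`.
  have hVx' := (((hl (ρ t x)).comp x (ρx t x)).fun_mul uxx).deriv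
  simp only [Function.comp_apply] at hVt hVx'
  have hEq := congrFun hVx x
  rw [hVx'] at hEq
  rw [hVx, hVxx, hVt, deriv_deriv_comm hu, hc x]
  have h1 := (hρpos t x).ne'
  have h2 := (hlampos t x).ne'
  field_simp
  linear_combination (-u t x * ρ t x) * hEq
end

section
/- Let p, φ : (0,1) → ℝ be twice continuously differentiable, let π : (0,1) → ℝ be differentiable with π'(s) = s p'(s) + s φ'(s) for all s ∈ (0,1), and set λ(s) := s² p'(s) + s² φ'(s). Let ρ, u : ℝ × ℝ → ℝ be smooth with 0 < ρ(t,x) < 1 for all (t,x), satisfying pointwise ∂_t ρ + ∂_x(ρ u) = 0 and ∂_t(ρ u) + ∂_x(ρ u²) − ∂_x(λ(ρ) ∂_x u) = 0. Then m := ρ u + ∂_x(π(ρ)) satisfies pointwise the conservative (dual) form ∂_t m + ∂_x(m u) = 0. -/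
/-!
With `g s = s p'(s) + s φ'(s)`, the chain rule gives `∂ₓ π(ρ) = g(ρ) ρₓ`, and the viscosity is
`λ(ρ) = ρ g(ρ)`. Differentiating the continuity equation in `x` and exchanging the mixed partials
of `ρ` gives `∂ₜ ρₓ = -(ρₓₓ u + 2 ρₓ uₓ + ρ uₓₓ)`, whence
`∂ₜ (g(ρ) ρₓ) + ∂ₓ (g(ρ) ρₓ u) = -∂ₓ (ρ g(ρ) uₓ) = -∂ₓ (λ(ρ) uₓ)`.
Adding the momentum equation yields the claim. The analytic inputs are the smoothness of partial
derivatives (`contDiff_partial_snd`) and their symmetry (`partial_comm`).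
-/

theorem partial_snd_eq {f : ℝ → ℝ → ℝ} (hf : ContDiff ℝ (⊤ : ℕ∞) (fun q : ℝ × ℝ => f q.1 q.2))
    (t x : ℝ) :
    deriv (fun y => f t y) x = fderiv ℝ (fun q : ℝ × ℝ => f q.1 q.2) (t, x) (0, 1) := by
  have h1 : HasDerivAt (fun y : ℝ => (t, y)) ((0 : ℝ), (1 : ℝ)) x :=
    (hasDerivAt_const x t).prodMk (hasDerivAt_id x)
  exact ((hf.differentiable (by simp) (t, x)).hasFDerivAt.comp_hasDerivAt x h1).deriv

theorem partial_fst_eq {f : ℝ → ℝ → ℝ} (hf : ContDiff ℝ (⊤ : ℕ∞) (fun q : ℝ × ℝ => f q.1 q.2))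
    (t x : ℝ) :
    deriv (fun s => f s x) t = fderiv ℝ (fun q : ℝ × ℝ => f q.1 q.2) (t, x) (1, 0) := by
  have h1 : HasDerivAt (fun s : ℝ => (s, x)) ((1 : ℝ), (0 : ℝ)) t :=
    (hasDerivAt_id t).prodMk (hasDerivAt_const t x)
  exact ((hf.differentiable (by simp) (t, x)).hasFDerivAt.comp_hasDerivAt t h1).deriv

theorem contDiff_fderiv_const {F : ℝ × ℝ → ℝ} (hF : ContDiff ℝ (⊤ : ℕ∞) F) (v : ℝ × ℝ) :
    ContDiff ℝ (⊤ : ℕ∞) (fun q => fderiv ℝ F q v) :=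
  (hF.fderiv_right (m := ((⊤ : ℕ∞) : WithTop ℕ∞)) (by simp)).clm_apply contDiff_const

theorem contDiff_partial_snd {f : ℝ → ℝ → ℝ}
    (hf : ContDiff ℝ (⊤ : ℕ∞) (fun q : ℝ × ℝ => f q.1 q.2)) :
    ContDiff ℝ (⊤ : ℕ∞) (fun q : ℝ × ℝ => deriv (fun y => f q.1 y) q.2) := by
  simpa only [partial_snd_eq hf] using contDiff_fderiv_const hf (0, 1)

theorem differentiable_slice_snd {f : ℝ → ℝ → ℝ}
    (hf : ContDiff ℝ (⊤ : ℕ∞) (fun q : ℝ × ℝ => f q.1 q.2)) (t : ℝ) :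
    Differentiable ℝ (fun y => f t y) :=
  (hf.differentiable (by simp)).comp
    ((differentiable_const t).prodMk differentiable_id : Differentiable ℝ fun y : ℝ => (t, y))

theorem differentiable_slice_fst {f : ℝ → ℝ → ℝ}
    (hf : ContDiff ℝ (⊤ : ℕ∞) (fun q : ℝ × ℝ => f q.1 q.2)) (x : ℝ) :
    Differentiable ℝ (fun s => f s x) :=
  (hf.differentiable (by simp)).comp
    (differentiable_id.prodMk (differentiable_const x) : Differentiable ℝ fun s : ℝ => (s, x))

/-- Schwarz's theorem in terms of iterated one-variable derivatives. -/
theorem partial_comm {f : ℝ → ℝ → ℝ}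
    (hf : ContDiff ℝ (⊤ : ℕ∞) (fun q : ℝ × ℝ => f q.1 q.2)) (t x : ℝ) :
    deriv (fun s => deriv (fun y => f s y) x) t = deriv (fun y => deriv (fun s => f s y) t) x := by
  set F : ℝ × ℝ → ℝ := fun q => f q.1 q.2
  have hd : DifferentiableAt ℝ (fderiv ℝ F) (t, x) :=
    (hf.fderiv_right (m := ((⊤ : ℕ∞) : WithTop ℕ∞)) (by simp)).differentiable (by simp) _
  have hsymm : IsSymmSndFDerivAt ℝ F (t, x) :=
    hf.contDiffAt.isSymmSndFDerivAt (by simpa using WithTop.coe_le_coe.2 (le_top : (2 : ℕ∞) ≤ ⊤))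
  have hv (v w : ℝ × ℝ) :
      fderiv ℝ (fun q => fderiv ℝ F q v) (t, x) w = fderiv ℝ (fderiv ℝ F) (t, x) w v := by
    rw [fderiv_clm_apply hd (differentiableAt_const v)]
    simp
  simp only [partial_snd_eq hf, partial_fst_eq hf]
  rw [partial_fst_eq (f := fun a b => fderiv ℝ (fun q : ℝ × ℝ => f q.1 q.2) (a, b) (0, 1))
      (contDiff_fderiv_const hf (0, 1)),
    partial_snd_eq (f := fun a b => fderiv ℝ (fun q : ℝ × ℝ => f q.1 q.2) (a, b) (1, 0))
      (contDiff_fderiv_const hf (1, 0))]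
  exact (hv _ _).trans ((hsymm.eq _ _).trans (hv _ _).symm)

theorem differentiableAt_deriv_of_contDiffOn {p : ℝ → ℝ} (hp : ContDiffOn ℝ 2 p (Set.Ioo 0 1))
    {s : ℝ} (hs : s ∈ Set.Ioo (0 : ℝ) 1) : DifferentiableAt ℝ (deriv p) s :=
  ((hp.deriv_of_isOpen (m := 1) isOpen_Ioo (by norm_num)).differentiableOn (by simp)).differentiableAt
    (isOpen_Ioo.mem_nhds hs)

/-- For smooth solutions of the pressureless Navier–Stokes system with viscosity
`λ(ρ) = ρ² p'(ρ) + ρ² φ'(ρ)`, the modified momentum `m = ρ u + ∂ₓ π(ρ)`, where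
`π' (s) = s p'(s) + s φ'(s)`, satisfies the conservative form `∂ₜ m + ∂ₓ (m u) = 0`. -/
theorem stmt2
    (p φ : ℝ → ℝ)
    (hp : ContDiffOn ℝ 2 p (Set.Ioo 0 1))
    (hφ : ContDiffOn ℝ 2 φ (Set.Ioo 0 1))
    (π : ℝ → ℝ)
    (hπ : ∀ s ∈ Set.Ioo (0 : ℝ) 1,
      HasDerivAt π (s * deriv p s + s * deriv φ s) s)
    (ρ u : ℝ → ℝ → ℝ)
    (hρ : ContDiff ℝ (⊤ : ℕ∞) (fun q : ℝ × ℝ => ρ q.1 q.2))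
    (hu : ContDiff ℝ (⊤ : ℕ∞) (fun q : ℝ × ℝ => u q.1 q.2))
    (hρrange : ∀ t x, ρ t x ∈ Set.Ioo (0 : ℝ) 1)
    (hcont : ∀ t x,
      deriv (fun s => ρ s x) t + deriv (fun y => ρ t y * u t y) x = 0)
    (hmom : ∀ t x,
      deriv (fun s => ρ s x * u s x) t
        + deriv (fun y => ρ t y * (u t y) ^ 2) x
        - deriv (fun y =>
            ((ρ t y) ^ 2 * deriv p (ρ t y) + (ρ t y) ^ 2 * deriv φ (ρ t y))
              * deriv (u t) y) x = 0) :
    ∀ t x,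
      deriv (fun s => ρ s x * u s x + deriv (fun y => π (ρ s y)) x) t
        + deriv (fun y => (ρ t y * u t y + deriv (fun z => π (ρ t z)) y) * u t y) x
      = 0 := by
  intro t x
  -- `g` is the derivative of `π`.
  obtain ⟨g, hg⟩ : ∃ g : ℝ → ℝ, g = fun s => s * deriv p s + s * deriv φ s := ⟨_, rfl⟩
  have hgd : HasDerivAt g (deriv g (ρ t x)) (ρ t x) := by
    have h1 := differentiableAt_deriv_of_contDiffOn hp (hρrange t x)
    have h2 := differentiableAt_deriv_of_contDiffOn hφ (hρrange t x)
    apply DifferentiableAt.hasDerivAt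
    rw [hg]
    fun_prop
  have hρx (t x : ℝ) : HasDerivAt (fun y => ρ t y) (deriv (fun y => ρ t y) x) x :=
    (differentiable_slice_snd hρ t x).hasDerivAt
  have hux (t x : ℝ) : HasDerivAt (fun y => u t y) (deriv (fun y => u t y) x) x :=
    (differentiable_slice_snd hu t x).hasDerivAt
  have hρt : HasDerivAt (fun s => ρ s x) (deriv (fun s => ρ s x) t) t :=
    (differentiable_slice_fst hρ x t).hasDerivAt
  have hut : HasDerivAt (fun s => u s x) (deriv (fun s => u s x) t) t :=
    (differentiable_slice_fst hu x t).hasDerivAt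
  have hπx (s y : ℝ) :
      deriv (fun z => π (ρ s z)) y = g (ρ s y) * deriv (fun z => ρ s z) y := by
    have h := (hπ _ (hρrange s y)).comp y (hρx s y)
    rw [hg]
    exact h.deriv
  have hρ' := contDiff_partial_snd hρ
  have hu' := contDiff_partial_snd hu
  have hρxx := (differentiable_slice_snd
    (f := fun a b => deriv (fun y => ρ a y) b) hρ' t x).hasDerivAt
  have huxx := (differentiable_slice_snd
    (f := fun a b => deriv (fun y => u a y) b) hu' t x).hasDerivAt
  have hρxt := (differentiable_slice_fst
    (f := fun a b => deriv (fun y => ρ a y) b) hρ' x t).hasDerivAt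
  have hρt_eq (y : ℝ) : deriv (fun s => ρ s y) t
      = -(deriv (fun z => ρ t z) y * u t y + ρ t y * deriv (fun z => u t z) y) := by
    have h := hcont t y
    rw [((hρx t y).fun_mul (hux t y)).deriv] at h
    linarith
  have hmixed := partial_comm hρ t x
  simp only [hρt_eq] at hmixed
  rw [((hρxx.fun_mul (hux t x)).fun_add ((hρx t x).fun_mul huxx)).fun_neg.deriv] at hmixed
  have hm := hmom t x
  have hvisc : (fun y => ((ρ t y) ^ 2 * deriv p (ρ t y) + (ρ t y) ^ 2 * deriv φ (ρ t y))
      * deriv (u t) y) = fun y => ρ t y * g (ρ t y) * deriv (fun z => u t z) y := by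
    funext y
    rw [hg]
    ring
  have hgx : HasDerivAt (fun y => g (ρ t y)) _ x := hgd.comp x (hρx t x)
  have hgt : HasDerivAt (fun s => g (ρ s x)) _ t := hgd.comp t hρt
  rw [hvisc, (((hρx t x).fun_mul hgx).fun_mul huxx).deriv, (hρt.fun_mul hut).deriv,
    ((hρx t x).fun_mul ((hux t x).fun_pow 2)).deriv] at hm
  simp only [hπx]
  rw [((hρt.fun_mul hut).fun_add (hgt.fun_mul hρxt)).deriv,
    ((((hρx t x).fun_mul (hux t x)).fun_add (hgx.fun_mul hρxx)).fun_mul (hux t x)).deriv, hmixed]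
  rw [hρt_eq x] at hm ⊢
  norm_num at hm
  linear_combination hm
end

section
/- For every M₀ > 0 and R > 0 there exists a constant C > 0 such that the following holds: for every 1-periodic continuously differentiable function u : ℝ → ℝ and every measurable 1-periodic function r : ℝ → ℝ with 0 ≤ r(x) ≤ R for almost every x and ∫₀¹ r(x) dx ≥ M₀, one has ∫₀¹ |u(x)| dx ≤ C (∫₀¹ |u'(x)| dx + ∫₀¹ r(x) |u(x)| dx). -/
/-!
Write `A = ∫₀¹ |u|`, `D = ∫₀¹ |u'|`, `W = ∫₀¹ r |u|`. By the fundamental theorem of calculus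
the oscillation of `u` on `[0, 1]` is at most `D`, so `A - D ≤ |u y|` for every `y ∈ [0, 1]`.
Integrating this against the weight `r` gives `(∫₀¹ r) (A - D) ≤ W`. Hence either `A ≤ D`, or
`M₀ (A - D) ≤ W`; in both cases `A ≤ (1 + 1 / M₀) (D + W)`.
-/

open MeasureTheory

lemma abs_le_abs_add_integral_abs_deriv {u : ℝ → ℝ} (hu : ContDiff ℝ 1 u) {x y : ℝ}
    (hx : x ∈ Set.Icc (0 : ℝ) 1) (hy : y ∈ Set.Icc (0 : ℝ) 1) :
    |u x| ≤ |u y| + ∫ t in (0 : ℝ)..1, |deriv u t| := by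
  have hc : Continuous (deriv u) := hu.continuous_deriv le_rfl
  have hftc : ∫ t in y..x, deriv u t = u x - u y :=
    intervalIntegral.integral_deriv_eq_sub
      (fun t _ => hu.differentiable one_ne_zero t) (hc.intervalIntegrable _ _)
  have hsub : Set.uIoc y x ⊆ Set.Ioc (0 : ℝ) 1 := fun t ht =>
    ⟨(le_min hy.1 hx.1).trans_lt ht.1, ht.2.trans (max_le hy.2 hx.2)⟩
  have hosc : |u x - u y| ≤ ∫ t in (0 : ℝ)..1, |deriv u t| := by
    rw [← hftc, intervalIntegral.integral_of_le zero_le_one]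
    refine (intervalIntegral.norm_integral_le_integral_norm_uIoc (f := deriv u)).trans ?_
    exact setIntegral_mono_set
      ((intervalIntegrable_iff_integrableOn_Ioc_of_le zero_le_one).1
        (hc.abs.intervalIntegrable 0 1))
      (Filter.Eventually.of_forall fun t => abs_nonneg _) hsub.eventuallyLE
  have := abs_sub_abs_le_abs_sub (u x) (u y)
  linarith

/-- Generalized Poincaré inequality on the one-dimensional torus (identified with
1-periodic functions on `ℝ`): the `L¹` norm of `u` is controlled by the `L¹` norm of
`u'` plus the weighted norm `∫ r |u|`, uniformly over nonnegative weights `r` bounded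
by `R` with mass at least `M₀`. -/
theorem stmt7 (M₀ R : ℝ) (hM₀ : 0 < M₀) (hR : 0 < R) :
    ∃ C > 0, ∀ u r : ℝ → ℝ,
      ContDiff ℝ 1 u → (∀ x, u (x + 1) = u x) →
      Measurable r → (∀ x, r (x + 1) = r x) →
      (∀ᵐ x : ℝ ∂volume, 0 ≤ r x ∧ r x ≤ R) →
      M₀ ≤ (∫ x in (0 : ℝ)..1, r x) →
      (∫ x in (0 : ℝ)..1, |u x|)
        ≤ C * ((∫ x in (0 : ℝ)..1, |deriv u x|) + ∫ x in (0 : ℝ)..1, r x * |u x|) := by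
  refine ⟨1 + 1 / M₀, by positivity, fun u r hu _ hr _ hrb hm => ?_⟩
  have hcu : Continuous fun x => |u x| := hu.continuous.abs
  have hri : IntervalIntegrable r volume 0 1 := by
    refine (intervalIntegrable_const (c := R)).mono_fun hr.aestronglyMeasurable ?_
    filter_upwards [ae_restrict_of_ae hrb] with x hx
    rw [Real.norm_of_nonneg hx.1, Real.norm_of_nonneg hR.le]
    exact hx.2
  have hrui : IntervalIntegrable (fun x => r x * |u x|) volume 0 1 :=
    hri.mul_continuousOn hcu.continuousOn
  have hD : 0 ≤ ∫ x in (0 : ℝ)..1, |deriv u x| :=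
    intervalIntegral.integral_nonneg zero_le_one fun _ _ => abs_nonneg _
  have hW : 0 ≤ ∫ x in (0 : ℝ)..1, r x * |u x| := by
    refine intervalIntegral.integral_nonneg_of_ae zero_le_one ?_
    filter_upwards [hrb] with x hx
    exact mul_nonneg hx.1 (abs_nonneg _)
  have hpt : ∀ y ∈ Set.Icc (0 : ℝ) 1,
      (∫ x in (0 : ℝ)..1, |u x|) - (∫ x in (0 : ℝ)..1, |deriv u x|) ≤ |u y| := by
    intro y hy
    have h := intervalIntegral.integral_mono_on zero_le_one (hcu.intervalIntegrable 0 1)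
      (intervalIntegrable_const (μ := volume))
      fun x hx => abs_le_abs_add_integral_abs_deriv hu hx hy
    rw [intervalIntegral.integral_const, sub_zero, one_smul] at h
    linarith
  generalize (∫ x in (0 : ℝ)..1, |u x|) = A at *
  generalize (∫ x in (0 : ℝ)..1, |deriv u x|) = D at *
  have hint : (∫ x in (0 : ℝ)..1, r x) * (A - D) ≤ ∫ x in (0 : ℝ)..1, r x * |u x| := by
    rw [← intervalIntegral.integral_mul_const]
    refine intervalIntegral.integral_mono_ae_restrict zero_le_one (hri.mul_const _) hrui ?_
    filter_upwards [ae_restrict_of_ae hrb, ae_restrict_mem measurableSet_Icc] with x hx hxm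
    exact mul_le_mul_of_nonneg_left (hpt x hxm) hx.1
  generalize (∫ x in (0 : ℝ)..1, r x * |u x|) = W at *
  have hD' : 0 ≤ 1 / M₀ * D := by positivity
  have hW' : 0 ≤ 1 / M₀ * W := by positivity
  rcases le_total A D with h | h
  · linarith
  · have h1 : M₀ * (A - D) ≤ W :=
      (mul_le_mul_of_nonneg_right hm (sub_nonneg.2 h)).trans hint
    have h2 : A - D ≤ 1 / M₀ * W := by
      rw [one_div_mul_eq_div, le_div_iff₀ hM₀]
      linarith
    linarith
end

section
/- Fix γ ≥ 0 and β > 1. There exists a constant c > 0, depending only on β and γ, such that for every ε > 0, every K > 0 and every ρ ∈ [0,1): if ε ∫₀^ρ s^γ (1−s)^{−β} ds ≤ K, then 1 − ρ ≥ c (ε/(K+ε))^{1/(β−1)}, i.e. ρ ≤ 1 − c (ε/(K+ε))^{1/(β−1)}. -/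
/-!
Write `a = β - 1` and `I = ∫₀^ρ s^γ (1-s)^(-β) ds`. On `[1/2, ρ]` the weight `s^γ` is at least
`2^(-γ)`, and `(1-s)^(-β)` has the primitive `(1-s)^(-a) / a`, so
`(1-ρ)^(-a) ≤ 2^a + a 2^γ I` (`rpow_le_integral`); for `ρ ≤ 1/2` the first term alone suffices.
With `ε I ≤ K` this gives `(1-ρ)^(-a) ≤ M (K+ε)/ε` for `M = 2^a + a 2^γ`, and raising to the power
`-1/a` yields the claim with `c = M^(-1/a)`.
-/

lemma integral_one_sub_rpow {β ρ : ℝ} (hβ : 1 < β) (h1 : 1 / 2 ≤ ρ) (h2 : ρ < 1) :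
    (β - 1) * ∫ s in (1 / 2 : ℝ)..ρ, (1 - s) ^ (-β)
      = (1 - ρ) ^ (-(β - 1)) - 2 ^ (β - 1) := by
  have hcomp := intervalIntegral.integral_comp_sub_left
    (a := 1 / 2) (b := ρ) (fun x : ℝ => x ^ (-β)) 1
  have h0 : (0 : ℝ) ∉ Set.uIcc (1 - ρ) (1 - 1 / 2) := by
    rw [Set.uIcc_of_le (by linarith)]
    intro h
    linarith [h.1]
  have hhalf : (1 - 1 / 2 : ℝ) ^ (-(β - 1)) = 2 ^ (β - 1) := by
    rw [show (1 - 1 / 2 : ℝ) = 2⁻¹ by norm_num, Real.inv_rpow (by norm_num),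
      Real.rpow_neg (by norm_num), inv_inv]
  rw [hcomp, integral_rpow (Or.inr ⟨by linarith, h0⟩), show -β + 1 = -(β - 1) by ring, hhalf]
  have : β - 1 ≠ 0 := by linarith
  field_simp
  ring

lemma continuousOn_integrand {γ β ρ : ℝ} (hγ : 0 ≤ γ) (h2 : ρ < 1) :
    ContinuousOn (fun s : ℝ => s ^ γ * (1 - s) ^ (-β)) (Set.Icc 0 ρ) := by
  refine (Real.continuous_rpow_const hγ).continuousOn.mul ?_
  refine ContinuousOn.rpow_const (by fun_prop) fun s hs => Or.inl ?_
  linarith [hs.2]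

lemma rpow_le_integral {γ β ρ : ℝ} (hγ : 0 ≤ γ) (hβ : 1 < β) (h0 : 0 ≤ ρ) (h2 : ρ < 1) :
    (1 - ρ) ^ (-(β - 1)) ≤
      2 ^ (β - 1) + (β - 1) * 2 ^ γ * ∫ s in (0 : ℝ)..ρ, s ^ γ * (1 - s) ^ (-β) := by
  have ha : 0 < β - 1 := by linarith
  have hpos : ∀ s : ℝ, 0 ≤ s → s ≤ ρ → 0 ≤ s ^ γ * (1 - s) ^ (-β) := fun s hs hs' =>
    mul_nonneg (Real.rpow_nonneg hs _) (Real.rpow_nonneg (by linarith) _)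
  rcases le_total ρ (1 / 2) with h1 | h1
  · have hI : 0 ≤ ∫ s in (0 : ℝ)..ρ, s ^ γ * (1 - s) ^ (-β) :=
      intervalIntegral.integral_nonneg h0 fun s hs => hpos s hs.1 hs.2
    have hx : (1 - ρ) ^ (-(β - 1)) ≤ (2 : ℝ) ^ (β - 1) := by
      rw [Real.rpow_neg (by linarith), ← Real.inv_rpow (by linarith)]
      refine Real.rpow_le_rpow (by simp; linarith) ?_ ha.le
      rw [inv_le_comm₀ (by linarith) (by norm_num)]
      linarith
    have : 0 ≤ (β - 1) * 2 ^ γ * ∫ s in (0 : ℝ)..ρ, s ^ γ * (1 - s) ^ (-β) := by positivity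
    linarith
  · have hc := continuousOn_integrand (β := β) hγ h2
    have hi : IntervalIntegrable (fun s : ℝ => s ^ γ * (1 - s) ^ (-β))
        MeasureTheory.volume (1 / 2) ρ := by
      refine ContinuousOn.intervalIntegrable_of_Icc h1 (hc.mono ?_)
      exact Set.Icc_subset_Icc_left (by norm_num)
    have hi0 : IntervalIntegrable (fun s : ℝ => s ^ γ * (1 - s) ^ (-β))
        MeasureTheory.volume 0 (1 / 2) := by
      refine ContinuousOn.intervalIntegrable_of_Icc (by norm_num) (hc.mono ?_)
      exact Set.Icc_subset_Icc_right h1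
    have hj : IntervalIntegrable (fun s : ℝ => (1 - s) ^ (-β))
        MeasureTheory.volume (1 / 2) ρ := by
      refine ContinuousOn.intervalIntegrable_of_Icc h1 ?_
      refine ContinuousOn.rpow_const (by fun_prop) fun s hs => Or.inl ?_
      linarith [hs.2]
    have hsplit := intervalIntegral.integral_add_adjacent_intervals hi0 hi
    have hleft : 0 ≤ ∫ s in (0 : ℝ)..(1 / 2), s ^ γ * (1 - s) ^ (-β) :=
      intervalIntegral.integral_nonneg (by norm_num) fun s hs => hpos s hs.1 (hs.2.trans h1)
    have hle : ∫ s in (1 / 2 : ℝ)..ρ, (1 - s) ^ (-β) ≤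
        2 ^ γ * ∫ s in (1 / 2 : ℝ)..ρ, s ^ γ * (1 - s) ^ (-β) := by
      rw [← intervalIntegral.integral_const_mul]
      refine intervalIntegral.integral_mono_on h1 hj (hi.const_mul _) fun s hs => ?_
      have hs0 : 0 ≤ s := by linarith [hs.1]
      rw [← mul_assoc, ← Real.mul_rpow (by norm_num) hs0]
      refine le_mul_of_one_le_left (Real.rpow_nonneg (by linarith [hs.2]) _) ?_
      exact Real.one_le_rpow (by linarith [hs.1]) hγ
    have hprim := integral_one_sub_rpow hβ h1 h2
    have h3 : (β - 1) * ∫ s in (1 / 2 : ℝ)..ρ, (1 - s) ^ (-β) ≤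
        (β - 1) * (2 ^ γ * ∫ s in (0 : ℝ)..ρ, s ^ γ * (1 - s) ^ (-β)) := by
      refine mul_le_mul_of_nonneg_left (hle.trans ?_) ha.le
      refine mul_le_mul_of_nonneg_left (by linarith) (by positivity)
    rw [mul_assoc]
    linarith

/-- A uniform bound on the singular potential `H(ρ) = ε ∫₀^ρ s^γ (1-s)^(-β) ds`
forces the density to stay below `1` by a margin of order `(ε/(K+ε))^(1/(β-1))`. -/
theorem stmt11 (γ β : ℝ) (hγ : 0 ≤ γ) (hβ : 1 < β) :
    ∃ c > 0, ∀ ε K ρ : ℝ, 0 < ε → 0 < K → ρ ∈ Set.Ico (0 : ℝ) 1 →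
      ε * (∫ s in (0 : ℝ)..ρ, s ^ γ * (1 - s) ^ (-β)) ≤ K →
      1 - ρ ≥ c * (ε / (K + ε)) ^ (1 / (β - 1)) := by
  have ha : 0 < β - 1 := by linarith
  have hM : (0 : ℝ) < 2 ^ (β - 1) + (β - 1) * 2 ^ γ := by positivity
  refine ⟨(2 ^ (β - 1) + (β - 1) * 2 ^ γ)⁻¹ ^ (1 / (β - 1)), by positivity, ?_⟩
  rintro ε K ρ hε hK ⟨h0, h2⟩ hI
  have hx : 0 < 1 - ρ := by linarith
  have key := rpow_le_integral hγ hβ h0 h2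
  set I := ∫ s in (0 : ℝ)..ρ, s ^ γ * (1 - s) ^ (-β)
  have hA : (0 : ℝ) < 2 ^ (β - 1) := by positivity
  have hB : (0 : ℝ) < (β - 1) * 2 ^ γ := by positivity
  have hbound : (1 - ρ) ^ (-(β - 1)) ≤ (2 ^ (β - 1) + (β - 1) * 2 ^ γ) * ((K + ε) / ε) := by
    rw [← mul_div_assoc, le_div_iff₀ hε]
    have h3 := mul_le_mul_of_nonneg_right key hε.le
    have h4 := mul_le_mul_of_nonneg_left hI hB.le
    nlinarith [mul_pos hA hK, mul_pos hB hε]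
  have hinv : (2 ^ (β - 1) + (β - 1) * 2 ^ γ)⁻¹ * (ε / (K + ε)) ≤ (1 - ρ) ^ (β - 1) := by
    rw [Real.rpow_neg hx.le] at hbound
    have := inv_le_of_inv_le₀ (by positivity) hbound
    rwa [mul_inv, inv_div] at this
  rw [ge_iff_le, ← Real.mul_rpow (by positivity) (by positivity)]
  calc _ ≤ ((1 - ρ) ^ (β - 1)) ^ (1 / (β - 1)) :=
        Real.rpow_le_rpow (by positivity) hinv (by positivity)
    _ = 1 - ρ := by
        rw [one_div, Real.rpow_rpow_inv hx.le ha.ne']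
end

section
/- Let α ∈ (0, 1/2), L > 0, m > 0 and B ≥ 0. Let ρ : ℝ → ℝ be continuously differentiable, L-periodic, with ρ(x) > 0 for all x. Suppose there exists x̄ ∈ [0, L] with ρ(x̄) ≥ m, and that the function g := ρ^{α − 1/2} satisfies ∫₀ᴸ g'(x)² dx ≤ B². Then for every x ∈ ℝ one has ρ(x)^{α − 1/2} ≤ m^{α − 1/2} + √L · B, and consequently ρ(x) ≥ (m^{α − 1/2} + √L · B)^{−2/(1 − 2α)}. -/
/-!
Put `g = ρ ^ (α - 1/2)`, a `C¹` function with the period `L` of `ρ`. By periodicity `x` may be moved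
into `[0, L]`, where the fundamental theorem of calculus and the Cauchy–Schwarz inequality give
`(g x - g x̄)² ≤ L ∫₀ᴸ g'² ≤ L B²` (`sq_sub_le_mul_integral_deriv_sq`). Since `α - 1/2 < 0`, the bound
`ρ x̄ ≥ m` becomes `g x̄ ≤ m ^ (α - 1/2)`, which proves the first inequality. The second one follows by
raising it to the negative power `-2 / (1 - 2α) = (α - 1/2)⁻¹`.
-/

/-- The Cauchy–Schwarz inequality for `h` and the constant function `1` on `[a, b]`. -/
theorem sq_integral_le_mul_integral_sq {h : ℝ → ℝ} (hh : Continuous h) {a b : ℝ} (hab : a ≤ b) :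
    (∫ t in a..b, h t) ^ 2 ≤ (b - a) * ∫ t in a..b, h t ^ 2 := by
  -- The quadratic `c ↦ ∫ (c - h)²` is nonnegative, so its discriminant is nonpositive.
  have key : ∀ c : ℝ, 0 ≤ (b - a) * (c * c) + (-2 * ∫ t in a..b, h t) * c
      + ∫ t in a..b, h t ^ 2 := by
    intro c
    have h0 : 0 ≤ ∫ t in a..b, (c - h t) ^ 2 :=
      intervalIntegral.integral_nonneg hab fun t _ => sq_nonneg _
    have h1 : ∫ t in a..b, (c - h t) ^ 2
        = ∫ t in a..b, ((c * c + (-2 * c) * h t) + h t ^ 2) := by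
      congr 1; ext t; ring
    rw [h1, intervalIntegral.integral_add, intervalIntegral.integral_add,
      intervalIntegral.integral_const, intervalIntegral.integral_const_mul, smul_eq_mul] at h0
    · linarith
    all_goals exact Continuous.intervalIntegrable (by fun_prop) _ _
  have hd := discrim_le_zero key
  unfold discrim at hd
  nlinarith

theorem sq_sub_le_mul_integral_deriv_sq {g : ℝ → ℝ} (hg : ContDiff ℝ 1 g) {L a b : ℝ}
    (ha : a ∈ Set.Icc 0 L) (hb : b ∈ Set.Icc 0 L) :
    (g b - g a) ^ 2 ≤ L * ∫ t in (0 : ℝ)..L, deriv g t ^ 2 := by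
  wlog hab : a ≤ b generalizing a b
  · have := this hb ha (le_of_not_ge hab)
    linarith [sub_sq_comm (g a) (g b)]
  have hc : Continuous (deriv g) := hg.continuous_deriv le_rfl
  have hftc : ∫ t in a..b, deriv g t = g b - g a :=
    intervalIntegral.integral_deriv_eq_sub
      (fun t _ => (hg.differentiable one_ne_zero).differentiableAt) (hc.intervalIntegrable _ _)
  have hmono : ∫ t in a..b, deriv g t ^ 2 ≤ ∫ t in (0 : ℝ)..L, deriv g t ^ 2 :=
    intervalIntegral.integral_mono_interval ha.1 hab hb.2
      (Filter.Eventually.of_forall fun t => sq_nonneg _) ((hc.pow 2).intervalIntegrable _ _)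
  have hnn : 0 ≤ ∫ t in a..b, deriv g t ^ 2 :=
    intervalIntegral.integral_nonneg hab fun t _ => sq_nonneg _
  have hcs := sq_integral_le_mul_integral_sq hc hab
  rw [hftc] at hcs
  refine hcs.trans (mul_le_mul ?_ hmono hnn ?_)
  · linarith [ha.1, hb.2]
  · linarith [ha.1, ha.2]

/-- Pointwise lower bound on the density from an `L²` control on the derivative of the
negative power `ρ^(α-1/2)` (`α < 1/2`) on a periodic domain, given one point where
`ρ ≥ m`. -/
theorem stmt13 (α L m B : ℝ)
    (hα : α ∈ Set.Ioo (0 : ℝ) (1 / 2)) (hL : 0 < L) (hm : 0 < m) (hB : 0 ≤ B)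
    (ρ : ℝ → ℝ) (hρ : ContDiff ℝ 1 ρ)
    (hper : ∀ x, ρ (x + L) = ρ x)
    (hpos : ∀ x, 0 < ρ x)
    (xbar : ℝ) (hxbar : xbar ∈ Set.Icc (0 : ℝ) L) (hρxbar : m ≤ ρ xbar)
    (hg : (∫ x in (0 : ℝ)..L, (deriv (fun y => ρ y ^ (α - 1 / 2)) x) ^ 2) ≤ B ^ 2) :
    ∀ x : ℝ,
      ρ x ^ (α - 1 / 2) ≤ m ^ (α - 1 / 2) + Real.sqrt L * B
      ∧ ρ x ≥ (m ^ (α - 1 / 2) + Real.sqrt L * B) ^ (-(2 / (1 - 2 * α))) := by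
  intro x
  have hα2 : α < 1 / 2 := hα.2
  have hgC : ContDiff ℝ 1 (fun y => ρ y ^ (α - 1 / 2)) :=
    hρ.rpow_const_of_ne fun y => (hpos y).ne'
  have hfirst : ρ x ^ (α - 1 / 2) ≤ m ^ (α - 1 / 2) + Real.sqrt L * B := by
    obtain ⟨y, hy, hxy⟩ := Function.Periodic.exists_mem_Ico₀ (f := ρ) hper hL x
    rw [hxy]
    have hsq := sq_sub_le_mul_integral_deriv_sq hgC hxbar (Set.Ico_subset_Icc_self hy)
    have hsq' : (ρ y ^ (α - 1 / 2) - ρ xbar ^ (α - 1 / 2)) ^ 2 ≤ (Real.sqrt L * B) ^ 2 := by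
      rw [mul_pow, Real.sq_sqrt hL.le]
      exact hsq.trans (mul_le_mul_of_nonneg_left hg hL.le)
    have hdiff := le_of_abs_le (abs_le_of_sq_le_sq hsq' (by positivity))
    have hbar : ρ xbar ^ (α - 1 / 2) ≤ m ^ (α - 1 / 2) :=
      Real.rpow_le_rpow_of_nonpos hm hρxbar (by linarith)
    linarith
  refine ⟨hfirst, ?_⟩
  have hexp : -(2 / (1 - 2 * α)) = (α - 1 / 2)⁻¹ := by
    rw [eq_comm, inv_eq_iff_eq_inv, ← neg_inv, inv_div]
    ring
  have hle := Real.rpow_le_rpow_of_nonpos (Real.rpow_pos_of_pos (hpos x) _) hfirst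
    (inv_nonpos.2 (by linarith : α - 1 / 2 ≤ 0))
  rw [Real.rpow_rpow_inv (hpos x).le (by linarith)] at hle
  rwa [hexp]
end

section
/- Let L > 0, let λ : ℝ → ℝ be continuously differentiable with λ(s) ≥ 0 for all s > 0, and let ρ, u : ℝ × ℝ → ℝ be smooth, L-periodic in the space variable, with ρ(t,x) > 0, solving pointwise ∂_t ρ + ∂_x(ρ u) = 0 and ∂_t(ρ u) + ∂_x(ρ u²) − ∂_x(λ(ρ) ∂_x u) = 0. Then for every convex, twice continuously differentiable S : ℝ → ℝ, the function t ↦ ∫₀ᴸ ρ(t,x) S(u(t,x)) dx is nonincreasing. -/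
/-!
The entropy density satisfies pointwise
`∂ₜ(ρ S(u)) = ∂ₓ(S'(u) λ(ρ) ∂ₓu - ρ u S(u)) - S''(u) λ(ρ) (∂ₓu)²`:
the difference of the two sides is `S(u) - u S'(u)` times the continuity equation plus `S'(u)` times
the momentum equation. Integrating over a period, the flux term vanishes by periodicity and the
remaining term is nonpositive since `S'' ≥ 0` and `λ(ρ) ≥ 0`. Differentiation under the integral
sign (`hasDerivAt_integral_of_contDiff_one`) identifies the left-hand side with the time derivative
of `∫ ρ S(u)`, so this function is antitone.
-/

open MeasureTheory Set Filter Topology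

theorem hasDerivAt_fst_of_contDiff {F : ℝ → ℝ → ℝ}
    (hF : ContDiff ℝ 1 (fun q : ℝ × ℝ => F q.1 q.2)) (t x : ℝ) :
    HasDerivAt (fun s => F s x) (fderiv ℝ (fun q : ℝ × ℝ => F q.1 q.2) (t, x) (1, 0)) t := by
  have h1 := (hF.differentiable one_ne_zero (t, x)).hasFDerivAt
  have h2 : HasDerivAt (fun s : ℝ => (s, x)) (1, 0) t :=
    (hasDerivAt_id t).prodMk (hasDerivAt_const t x)
  exact h1.comp_hasDerivAt t h2

/-- Differentiation under the integral sign over a compact interval for a jointly `C¹` integrand;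
on a compact neighbourhood the time derivative is bounded by a constant. -/
theorem hasDerivAt_integral_of_contDiff_one {F : ℝ → ℝ → ℝ}
    (hF : ContDiff ℝ 1 (fun q : ℝ × ℝ => F q.1 q.2)) (a b t : ℝ) :
    HasDerivAt (fun s => ∫ x in a..b, F s x) (∫ x in a..b, deriv (fun s => F s x) t) t := by
  set F' : ℝ → ℝ → ℝ := fun t x => fderiv ℝ (fun q : ℝ × ℝ => F q.1 q.2) (t, x) (1, 0) with hF'
  have hF'c : Continuous (fun q : ℝ × ℝ => F' q.1 q.2) :=
    (hF.continuous_fderiv one_ne_zero).clm_apply continuous_const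
  have hd : ∀ t x, HasDerivAt (fun s => F s x) (F' t x) t := hasDerivAt_fst_of_contDiff hF
  obtain ⟨C, hC⟩ := ((isCompact_Icc (a := t - 1) (b := t + 1)).prod
    (isCompact_uIcc (a := a) (b := b))).exists_bound_of_continuousOn hF'c.continuousOn
  have hFx : ∀ s, Continuous (F s) := fun s =>
    hF.continuous.comp (Continuous.prodMk_right s)
  have hF'x : ∀ s, Continuous (F' s) := fun s =>
    hF'c.comp (Continuous.prodMk_right s)
  have key := intervalIntegral.hasDerivAt_integral_of_dominated_loc_of_deriv_le
    (μ := volume) (a := a) (b := b) (F := F) (F' := F') (x₀ := t) (s := Icc (t - 1) (t + 1))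
    (bound := fun _ => C)
    (Icc_mem_nhds (by linarith) (by linarith))
    (Eventually.of_forall fun s => (hFx s).aestronglyMeasurable)
    ((hFx t).intervalIntegrable a b)
    (hF'x t).aestronglyMeasurable
    (Eventually.of_forall fun x hx s hs => hC (s, x) ⟨hs, uIoc_subset_uIcc hx⟩)
    intervalIntegrable_const
    (Eventually.of_forall fun x _ s _ => hd s x)
  have he : (fun x => deriv (fun s => F s x) t) = F' t := funext fun x => (hd t x).deriv
  rw [he]
  exact key.2

/-- Integrated entropy inequality: for smooth spatially periodic solutions of the
pressureless compressible Navier–Stokes system with nonnegative viscosity `λ(ρ)`,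
the quantity `∫₀ᴸ ρ S(u) dx` is nonincreasing in time for every convex `C²` entropy. -/
theorem stmt18
    (L : ℝ) (hL : 0 < L)
    (lam : ℝ → ℝ) (hlam : ContDiff ℝ 1 lam)
    (hlamnn : ∀ s : ℝ, 0 < s → 0 ≤ lam s)
    (ρ u : ℝ → ℝ → ℝ)
    (hρ : ContDiff ℝ (⊤ : ℕ∞) (fun q : ℝ × ℝ => ρ q.1 q.2))
    (hu : ContDiff ℝ (⊤ : ℕ∞) (fun q : ℝ × ℝ => u q.1 q.2))
    (hρper : ∀ t x, ρ t (x + L) = ρ t x)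
    (huper : ∀ t x, u t (x + L) = u t x)
    (hρpos : ∀ t x, 0 < ρ t x)
    (hcont : ∀ t x,
      deriv (fun s => ρ s x) t + deriv (fun y => ρ t y * u t y) x = 0)
    (hmom : ∀ t x,
      deriv (fun s => ρ s x * u s x) t
        + deriv (fun y => ρ t y * (u t y) ^ 2) x
        - deriv (fun y => lam (ρ t y) * deriv (u t) y) x = 0) :
    ∀ S : ℝ → ℝ, ContDiff ℝ 2 S → ConvexOn ℝ Set.univ S →
      Antitone (fun t => ∫ x in (0 : ℝ)..L, ρ t x * S (u t x)) := by
  intro S hS hSconv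
  have hS1 : ContDiff ℝ 1 (deriv S) := ((contDiff_succ_iff_deriv (n := 1)).1 hS).2.2
  have hSd : ∀ v, HasDerivAt S (deriv S v) v := fun v =>
    (hS.differentiable two_ne_zero v).hasDerivAt
  have hSdd : ∀ v, HasDerivAt (deriv S) (deriv (deriv S) v) v := fun v =>
    (hS1.differentiable one_ne_zero v).hasDerivAt
  have hSnn : ∀ v, 0 ≤ deriv (deriv S) v := fun v =>
    (monotoneOn_univ.1 (hSconv.monotoneOn_deriv fun x _ => (hSd x).differentiableAt)).deriv_nonneg
  have hF : ContDiff ℝ 1 (fun q : ℝ × ℝ => ρ q.1 q.2 * S (u q.1 q.2)) :=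
    (hρ.of_le (by exact_mod_cast le_top)).mul
      ((hS.of_le one_le_two).comp (hu.of_le (by exact_mod_cast le_top)))
  have hD := hasDerivAt_integral_of_contDiff_one (F := fun t x => ρ t x * S (u t x)) hF 0 L
  refine antitone_of_deriv_nonpos (fun t => (hD t).differentiableAt) fun t => ?_
  rw [(hD t).deriv]
  have hρx : ContDiff ℝ (⊤ : ℕ∞) (ρ t) := hρ.comp (contDiff_prodMk_right t)
  have hux : ContDiff ℝ (⊤ : ℕ∞) (u t) := hu.comp (contDiff_prodMk_right t)
  have hu' : ContDiff ℝ 1 (deriv (u t)) :=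
    ((contDiff_succ_iff_deriv (n := 1)).1
      (hux.of_le (WithTop.coe_le_coe.2 (le_top : (2 : ℕ∞) ≤ ⊤)))).2.2
  have hρ1 : ContDiff ℝ 1 (ρ t) := hρx.of_le (by exact_mod_cast le_top)
  have hu1 : ContDiff ℝ 1 (u t) := hux.of_le (by exact_mod_cast le_top)
  have hw : ContDiff ℝ 1 (fun y => lam (ρ t y) * deriv (u t) y) := (hlam.comp hρ1).mul hu'
  set G : ℝ → ℝ := fun y =>
    deriv S (u t y) * (lam (ρ t y) * deriv (u t) y) - ρ t y * u t y * S (u t y) with hG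
  have hGc : ContDiff ℝ 1 G :=
    ((hS1.comp hu1).mul hw).sub ((hρ1.mul hu1).mul ((hS.of_le one_le_two).comp hu1))
  set D : ℝ → ℝ := fun y => deriv (deriv S) (u t y) * lam (ρ t y) * (deriv (u t) y) ^ 2 with hDdef
  have hDc : Continuous D :=
    (((hS1.continuous_deriv le_rfl).comp hu1.continuous).mul
      (hlam.continuous.comp hρ1.continuous)).mul (hu'.continuous.pow 2)
  have hpt : ∀ x, deriv (fun s => ρ s x * S (u s x)) t = deriv G x - D x := by
    intro x
    have hρt := (hasDerivAt_fst_of_contDiff (F := ρ) (hρ.of_le (by exact_mod_cast le_top)) t x)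
    have hut := (hasDerivAt_fst_of_contDiff (F := u) (hu.of_le (by exact_mod_cast le_top)) t x)
    have hρy := (hρ1.differentiable one_ne_zero x).hasDerivAt
    have huy := (hu1.differentiable one_ne_zero x).hasDerivAt
    have hwy := (hw.differentiable one_ne_zero x).hasDerivAt
    have hc := hcont t x
    have hm := hmom t x
    rw [hρt.deriv, (hρy.fun_mul huy).deriv] at hc
    rw [(hρt.fun_mul hut).deriv, (hρy.fun_mul (huy.fun_pow 2)).deriv] at hm
    have hFt : HasDerivAt (fun s => ρ s x * S (u s x)) _ t :=
      hρt.fun_mul ((hSd (u t x)).comp t hut)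
    have hGx : HasDerivAt G _ x :=
      (((hSdd (u t x)).comp x huy).fun_mul hwy).fun_sub
        ((hρy.fun_mul huy).fun_mul ((hSd (u t x)).comp x huy))
    rw [hFt.deriv, hGx.deriv]
    simp only [hDdef, Function.comp_apply]
    push_cast at hm
    linear_combination (S (u t x) - deriv S (u t x) * u t x) * hc + deriv S (u t x) * hm
  simp only [hpt]
  rw [intervalIntegral.integral_sub ((hGc.continuous_deriv le_rfl).intervalIntegrable 0 L)
      (hDc.intervalIntegrable 0 L),
    intervalIntegral.integral_deriv_eq_sub (fun x _ => hGc.differentiable one_ne_zero x)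
      ((hGc.continuous_deriv le_rfl).intervalIntegrable 0 L)]
  have hGper : G L = G 0 := by
    have e1 : ρ t L = ρ t 0 := by simpa using hρper t 0
    have e2 : u t L = u t 0 := by simpa using huper t 0
    have e3 : deriv (u t) L = deriv (u t) 0 := by
      have h := deriv_comp_add_const (u t) L 0
      rw [zero_add, funext (huper t)] at h
      exact h.symm
    simp only [hG, e1, e2, e3]
  have hDnn : 0 ≤ ∫ x in (0 : ℝ)..L, D x :=
    intervalIntegral.integral_nonneg hL.le fun x _ =>
      mul_nonneg (mul_nonneg (hSnn _) (hlamnn _ (hρpos t x))) (sq_nonneg _)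
  linarith
end
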